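/- arXiv:2107.00378 — 4 statements merged into one kernel-verified Lean document; each statement's English description precedes it below -/
import Mathlib

section
/- Let X be a positive real-valued random variable with continuous probability density function f, cumulative distribution function F satisfying F(x) < 1 for all x > 0, hazard rate function r(t) = f(t)/(1 − F(t)), and quantile function Q. Suppose X is long-tailed, E[X] < ∞, and both limits lim_{t→∞} r(t) and lim_{t→∞} t²·f(t) exist. Then there exists p ∈ (0,1) such that (1 − p)·Q(p) + ∫₀^p Q(u) du < p·E[X]. -/
open MeasureTheory Filter Set Topology ProbabilityTheory

/-!
For a random variable `X` with law `μ`, the expression `(1 - p) * Q p + ∫ u in 0..p, Q u` is the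
truncated mean `E[min(X, Q p)]`, because `Q` transports Lebesgue measure on `(0, 1)` to `μ`. At
`p = F t` we have `Q p ≤ t`, so it is at most `E[min(X, t)] = E[X] - E[(X - t)⁺]`, and it suffices
to find `t` with `E[(X - t)⁺] > E[X] * P(X > t)`: the mean residual life at `t` must exceed the
mean. For a long-tailed variable the mean residual life tends to infinity, since Markov's inequality
gives `E[(X - t)⁺] ≥ d * P(X > t + d)`, where `P(X > t + d) ∼ P(X > t)` for each fixed `d`.
-/

section Quantile

/-- The quantile function of a law `μ` on `ℝ`, the generalized inverse of its cdf. Only the values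
at `p ∈ (0, 1)` are meaningful: elsewhere `sInf` may be taken of an empty or unbounded set. -/
noncomputable def quantile (μ : Measure ℝ) (p : ℝ) : ℝ :=
  sInf {t | p ≤ cdf μ t}

variable {μ : Measure ℝ} {p t : ℝ}

theorem bddBelow_setOf_le_cdf (hp : 0 < p) : BddBelow {t | p ≤ cdf μ t} := by
  obtain ⟨a, ha⟩ := ((tendsto_cdf_atBot μ).eventually_lt_const hp).exists
  exact ⟨a, fun t ht ↦ ((monotone_cdf μ).reflect_lt (ha.trans_le ht)).le⟩

theorem nonempty_setOf_le_cdf (hp : p < 1) : {t | p ≤ cdf μ t}.Nonempty :=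
  ((tendsto_cdf_atTop μ).eventually_const_le hp).exists

theorem quantile_le_iff (hp : p ∈ Ioo 0 1) : quantile μ p ≤ t ↔ p ≤ cdf μ t := by
  refine ⟨fun h ↦ ?_, fun h ↦ csInf_le (bddBelow_setOf_le_cdf hp.1) h⟩
  have le_cdf_of_gt : ∀ s ∈ Ioi t, p ≤ cdf μ s := fun s hs ↦ by
    obtain ⟨w, hw, hws⟩ := exists_lt_of_csInf_lt (nonempty_setOf_le_cdf hp.2) (h.trans_lt hs)
    exact le_trans hw (monotone_cdf μ hws.le)
  have cdf_rightCont : Tendsto (cdf μ) (𝓝[>] t) (𝓝 (cdf μ t)) :=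
    ((cdf μ).right_continuous t).mono Ioi_subset_Ici_self
  exact ge_of_tendsto cdf_rightCont (eventually_nhdsWithin_of_forall le_cdf_of_gt)

theorem monotoneOn_quantile : MonotoneOn (quantile μ) (Ioo 0 1) := fun _ hp _ hq hpq ↦
  (quantile_le_iff hp).2 (hpq.trans ((quantile_le_iff hq).1 le_rfl))

theorem aemeasurable_quantile : AEMeasurable (quantile μ) (volume.restrict (Ioo 0 1)) :=
  aemeasurable_restrict_of_monotoneOn measurableSet_Ioo monotoneOn_quantile

variable (μ) in
theorem map_quantile [IsProbabilityMeasure μ] :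
    (volume.restrict (Ioo 0 1)).map (quantile μ) = μ := by
  refine Measure.ext_of_Iic _ _ fun t ↦ ?_
  have preimage_inter : quantile μ ⁻¹' Iic t ∩ Ioo 0 1 = Iic (cdf μ t) ∩ Ioo 0 1 := by
    ext u
    exact and_congr_left quantile_le_iff
  calc (volume.restrict (Ioo 0 1)).map (quantile μ) (Iic t)
      = volume (Iic (cdf μ t) ∩ Ioo 0 1) := by
        rw [Measure.map_apply_of_aemeasurable aemeasurable_quantile measurableSet_Iic,
          Measure.restrict_apply' measurableSet_Ioo, preimage_inter]
    _ = volume (Ioc 0 1 ∩ Iic (cdf μ t)) := by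
        rw [inter_comm]
        exact measure_congr (Ioo_ae_eq_Ioc.inter (ae_eq_refl _))
    _ = μ (Iic t) := by
        rw [Ioc_inter_Iic, Real.volume_Ioc, min_eq_right (cdf_le_one μ t), sub_zero, ofReal_cdf]

section Integral

variable [IsProbabilityMeasure μ] {E : Type*} [NormedAddCommGroup E] {g : ℝ → E}

theorem intervalIntegrable_comp_quantile (hg : Integrable g μ) :
    IntervalIntegrable (fun u ↦ g (quantile μ u)) volume 0 1 := by
  rw [intervalIntegrable_iff_integrableOn_Ioo_of_le zero_le_one]
  rw [← map_quantile μ] at hg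
  exact hg.comp_aemeasurable aemeasurable_quantile

theorem integral_comp_quantile [NormedSpace ℝ E] (hg : AEStronglyMeasurable g μ) :
    ∫ u in 0..1, g (quantile μ u) = ∫ x, g x ∂μ := by
  rw [intervalIntegral.integral_of_le zero_le_one, integral_Ioc_eq_integral_Ioo]
  rw [← map_quantile μ] at hg
  conv_rhs => rw [← map_quantile μ]
  exact (integral_map aemeasurable_quantile hg).symm

theorem integral_min_quantile (hμ : Integrable (fun x ↦ x) μ) (hp : p ∈ Ioo 0 1) :
    ∫ x, min x (quantile μ p) ∂μ = (1 - p) * quantile μ p + ∫ u in 0..p, quantile μ u := by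
  set q := quantile μ p
  have integrable_min : Integrable (fun x ↦ min x q) μ := hμ.inf (integrable_const q)
  have intervalIntegrable_min {a b : ℝ} (ha : a ∈ Icc 0 1) (hb : b ∈ Icc 0 1) :
      IntervalIntegrable (fun u ↦ min (quantile μ u) q) volume a b :=
    (intervalIntegrable_comp_quantile integrable_min).mono_set
      ((uIcc_subset_Icc ha hb).trans Icc_subset_uIcc)
  have integral_left : ∫ u in 0..p, min (quantile μ u) q = ∫ u in 0..p, quantile μ u :=
    intervalIntegral.integral_congr_Ioo_of_le hp.1.le fun u hu ↦
      min_eq_left (monotoneOn_quantile ⟨hu.1, hu.2.trans hp.2⟩ hp hu.2.le)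
  have integral_right : ∫ u in p..1, min (quantile μ u) q = (1 - p) * q := by
    rw [← smul_eq_mul, ← intervalIntegral.integral_const]
    exact intervalIntegral.integral_congr_Ioo_of_le hp.2.le fun u hu ↦
      min_eq_right (monotoneOn_quantile hp ⟨hp.1.trans hu.1, hu.2⟩ hu.1.le)
  rw [← integral_comp_quantile integrable_min.aestronglyMeasurable,
    ← intervalIntegral.integral_add_adjacent_intervals
      (intervalIntegrable_min (by simp) (Ioo_subset_Icc_self hp))
      (intervalIntegrable_min (Ioo_subset_Icc_self hp) (by simp)),
    integral_left, integral_right, add_comm]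

theorem one_sub_cdf_mul_quantile_add_integral_quantile_le (hμ : Integrable (fun x ↦ x) μ)
    (ht : cdf μ t ∈ Ioo 0 1) :
    (1 - cdf μ t) * quantile μ (cdf μ t) + ∫ u in 0..cdf μ t, quantile μ u
      ≤ ∫ x, min x t ∂μ := by
  rw [← integral_min_quantile hμ ht]
  have quantile_cdf_le : quantile μ (cdf μ t) ≤ t := (quantile_le_iff ht).2 le_rfl
  exact integral_mono (hμ.inf (integrable_const _)) (hμ.inf (integrable_const _)) fun x ↦
    min_le_min_left x quantile_cdf_le

end Integral

end Quantile

section RandomVariable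

variable {Ω : Type*} [MeasurableSpace Ω] {P : Measure Ω} {X : Ω → ℝ}

theorem cdf_map_eq_measureReal_setOf_le [IsProbabilityMeasure P] (hX : AEMeasurable X P) (t : ℝ) :
    cdf (P.map X) t = P.real {ω | X ω ≤ t} := by
  have := Measure.isProbabilityMeasure_map hX
  rw [cdf_eq_real, map_measureReal_apply_of_aemeasurable hX measurableSet_Iic]
  rfl

theorem measureReal_setOf_lt_eq_one_sub_cdf_map [IsProbabilityMeasure P] (hX : AEMeasurable X P)
    (t : ℝ) : P.real {ω | t < X ω} = 1 - cdf (P.map X) t := by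
  rw [cdf_map_eq_measureReal_setOf_le hX,
    ← probReal_compl_eq_one_sub₀ (nullMeasurableSet_le hX aemeasurable_const)]
  simp only [compl_ofPred, not_le]

theorem integral_min_const_add_integral_max_sub [IsFiniteMeasure P] (hX : Integrable X P) (t : ℝ) :
    ∫ ω, min (X ω) t ∂P + ∫ ω, max (X ω - t) 0 ∂P = ∫ ω, X ω ∂P := by
  have integrable_min : Integrable (fun ω ↦ min (X ω) t) P := hX.inf (integrable_const t)
  have integrable_max : Integrable (fun ω ↦ max (X ω - t) 0) P :=
    (hX.sub (integrable_const t)).pos_part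
  rw [← integral_add integrable_min integrable_max]
  congr with ω
  grind

theorem mul_measureReal_lt_le_integral_max_sub [IsFiniteMeasure P] (hX : Integrable X P)
    (t : ℝ) {d : ℝ} (hd : 0 ≤ d) :
    d * P.real {ω | t + d < X ω} ≤ ∫ ω, max (X ω - t) 0 ∂P :=
  calc d * P.real {ω | t + d < X ω}
      ≤ d * P.real {ω | d ≤ max (X ω - t) 0} := by
        gcongr 1
        refine measureReal_mono fun ω (hω : t + d < X ω) ↦ ?_
        exact le_max_of_le_left (le_sub_iff_add_le'.2 hω.le)
    _ ≤ ∫ ω, max (X ω - t) 0 ∂P :=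
        mul_meas_ge_le_integral_of_nonneg (ae_of_all _ fun _ ↦ le_max_right _ _)
          (hX.sub (integrable_const t)).pos_part d

/-- A random variable is long-tailed if it exceeds every level with positive probability and,
given that it exceeds a high level, it exceeds it by any fixed amount with probability close
to `1`. -/
structure IsLongTailed (X : Ω → ℝ) (P : Measure Ω) : Prop where
  measureReal_pos : ∀ x > 0, 0 < P.real {ω | x < X ω}
  tendsto_div : ∀ y > 0,
    Tendsto (fun x ↦ P.real {ω | x + y < X ω} / P.real {ω | x < X ω}) atTop (𝓝 1)

theorem IsLongTailed.eventually_mul_measureReal_lt_integral_max_sub [IsFiniteMeasure P]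
    (hlong : IsLongTailed X P) (hX : Integrable X P) (c : ℝ) :
    ∀ᶠ t in atTop, c * P.real {ω | t < X ω} < ∫ ω, max (X ω - t) 0 ∂P := by
  set d := 2 * |c| + 1
  have half_lt_ratio := (hlong.tendsto_div d (by positivity)).eventually_const_lt one_half_lt_one
  filter_upwards [half_lt_ratio, eventually_gt_atTop 0] with t ht ht0
  have tail_pos := hlong.measureReal_pos t ht0
  rw [lt_div_iff₀ tail_pos] at ht
  calc c * P.real {ω | t < X ω}
      ≤ d * (1 / 2 * P.real {ω | t < X ω}) := by nlinarith [le_abs_self c]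
    _ < d * P.real {ω | t + d < X ω} := by gcongr
    _ ≤ ∫ ω, max (X ω - t) 0 ∂P :=
        mul_measureReal_lt_le_integral_max_sub hX t (by positivity)

theorem stmt_0_general [IsProbabilityMeasure P]
    (hX : Integrable X P) (hlong : IsLongTailed X P)
    {F : ℝ → ℝ} (hF : ∀ t, F t = P.real {ω | X ω ≤ t})
    {Q : ℝ → ℝ} (hQ : ∀ p ∈ Ioo (0 : ℝ) 1, Q p = sInf {t | p ≤ F t}) :
    ∃ p ∈ Ioo (0 : ℝ) 1, (1 - p) * Q p + ∫ u in (0 : ℝ)..p, Q u < p * ∫ ω, X ω ∂P := by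
  set μ := P.map X
  have : IsProbabilityMeasure μ := Measure.isProbabilityMeasure_map hX.aemeasurable
  have hμ : Integrable (fun x ↦ x) μ :=
    (integrable_map_measure aestronglyMeasurable_id hX.aemeasurable).2 hX
  obtain rfl : F = cdf μ :=
    funext fun t ↦ (hF t).trans (cdf_map_eq_measureReal_setOf_le hX.aemeasurable t).symm
  have Q_eq : EqOn Q (quantile μ) (Ioo 0 1) := hQ
  obtain ⟨t, residual_gt, t_pos, cdf_pos⟩ :=
    ((hlong.eventually_mul_measureReal_lt_integral_max_sub hX (∫ ω, X ω ∂P)).and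
      ((eventually_gt_atTop 0).and
        ((tendsto_cdf_atTop μ).eventually_const_lt zero_lt_one))).exists
  have tail_eq := measureReal_setOf_lt_eq_one_sub_cdf_map hX.aemeasurable t
  have ht : cdf μ t ∈ Ioo 0 1 := ⟨cdf_pos, by linarith [hlong.measureReal_pos t t_pos]⟩
  refine ⟨cdf μ t, ht, ?_⟩
  calc (1 - cdf μ t) * Q (cdf μ t) + ∫ u in 0..cdf μ t, Q u
      = (1 - cdf μ t) * quantile μ (cdf μ t) + ∫ u in 0..cdf μ t, quantile μ u := by
        rw [Q_eq ht, intervalIntegral.integral_congr_Ioo_of_le cdf_pos.le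
          (Q_eq.mono (Ioo_subset_Ioo_right ht.2.le))]
    _ ≤ ∫ x, min x t ∂μ := one_sub_cdf_mul_quantile_add_integral_quantile_le hμ ht
    _ = ∫ ω, min (X ω) t ∂P :=
        integral_map hX.aemeasurable (hμ.inf (integrable_const t)).aestronglyMeasurable
    _ < cdf μ t * ∫ ω, X ω ∂P := by
        rw [tail_eq] at residual_gt
        linarith [integral_min_const_add_integral_max_sub hX t]

end RandomVariable

theorem stmt_0 {Ω : Type*} [MeasureSpace Ω] [IsProbabilityMeasure (ℙ : Measure Ω)]
    (X : Ω → ℝ) (hX : Measurable X) (hXpos : ∀ ω, 0 < X ω)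
    (F : ℝ → ℝ) (hF : ∀ t, F t = (ℙ {ω | X ω ≤ t}).toReal)
    (f : ℝ → ℝ) (hf_nonneg : ∀ t ∈ Set.Ioi (0:ℝ), 0 ≤ f t)
    (hf_int : IntegrableOn f (Set.Ioi (0:ℝ)))
    (hpdf : ∀ t, 0 ≤ t → F t = ∫ u in (0:ℝ)..t, f u)
    (hf_cont : ContinuousOn f (Set.Ioi (0:ℝ)))
    (hFlt1 : ∀ x > (0:ℝ), F x < 1)
    (r : ℝ → ℝ) (hr : ∀ t, r t = f t / (1 - F t))
    (Q : ℝ → ℝ) (hQ : ∀ p ∈ Set.Ioo (0:ℝ) 1, Q p = sInf {t : ℝ | p ≤ F t})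
    (hlt_pos : ∀ x > (0:ℝ), 0 < (ℙ {ω | x < X ω}).toReal)
    (hlt : ∀ y > (0:ℝ), Tendsto (fun x => (ℙ {ω | x + y < X ω}).toReal / (ℙ {ω | x < X ω}).toReal)
      atTop (𝓝 1))
    (hXint : Integrable X)
    (hr_lim : ∃ L : ℝ, Tendsto r atTop (𝓝 L))
    (hf_lim : ∃ L : ℝ, Tendsto (fun t => t ^ 2 * f t) atTop (𝓝 L)) :
    ∃ p ∈ Set.Ioo (0:ℝ) 1,
      (1 - p) * Q p + ∫ u in (0:ℝ)..p, Q u < p * ∫ ω, X ω := by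
  exact stmt_0_general hXint ⟨hlt_pos, hlt⟩ hF hQ
end

section
/- Let X be a positive real-valued random variable with probability density function f, cumulative distribution function F satisfying F(x) < 1 for all x > 0, and hazard rate function r(t) = f(t)/(1 − F(t)). Assume the limit lim_{t→∞} r(t) exists. Then X is long-tailed if and only if lim_{t→∞} r(t) = 0. -/
open MeasureTheory Filter Set Topology ProbabilityTheory

/-!
The survival function `G = 1 - F` is locally absolutely continuous with `G' = -f` almost everywhere,
so `log G` is absolutely continuous with derivative `-r`, and
`G (x + y) / G x = exp (-∫ t in x..x + y, r t)`. If `r → L`, this ratio tends to `exp (-(y * L))`,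
which is `1` for every `y > 0` exactly when `L = 0`.
-/

section AbsolutelyContinuous

variable {a b : ℝ}

theorem absolutelyContinuousOnInterval_comp_of_lipschitzOnWith {X Y : Type*}
    [PseudoMetricSpace X] [PseudoMetricSpace Y] {φ : X → Y} {u : ℝ → X} {K : NNReal}
    (hφ : LipschitzOnWith K φ (u '' uIcc a b)) (hu : AbsolutelyContinuousOnInterval u a b) :
    AbsolutelyContinuousOnInterval (fun x ↦ φ (u x)) a b := by
  have hlim := Tendsto.const_mul (K : ℝ) hu
  rw [mul_zero] at hlim
  refine squeeze_zero' (.of_forall fun E ↦ by positivity) ?_ hlim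
  filter_upwards [mem_inf_of_right (mem_principal_self _)] with E hE
  rw [Finset.mul_sum]
  exact Finset.sum_le_sum fun i hi ↦ hφ.dist_le_mul _ (mem_image_of_mem u (hE.1 i hi).1)
    _ (mem_image_of_mem u (hE.1 i hi).2)

theorem absolutelyContinuousOnInterval_comp_of_contDiffOn {E : Type*} [NormedAddCommGroup E]
    [NormedSpace ℝ E] {φ : ℝ → E} {u : ℝ → ℝ} (hφ : ContDiffOn ℝ 1 φ (u '' uIcc a b))
    (hu : AbsolutelyContinuousOnInterval u a b) :
    AbsolutelyContinuousOnInterval (fun x ↦ φ (u x)) a b := by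
  have hconvex : Convex ℝ (u '' uIcc a b) :=
    (isPreconnected_uIcc.image u hu.continuousOn).ordConnected.convex
  have hcompact : IsCompact (u '' uIcc a b) := isCompact_uIcc.image_of_continuousOn hu.continuousOn
  obtain ⟨K, hK⟩ := hφ.exists_lipschitzOnWith one_ne_zero hconvex hcompact
  exact absolutelyContinuousOnInterval_comp_of_lipschitzOnWith hK hu

theorem integral_deriv_div_eq_log_sub_log {u : ℝ → ℝ} (hu : AbsolutelyContinuousOnInterval u a b)
    (hne : ∀ x ∈ uIcc a b, u x ≠ 0) :
    ∫ x in a..b, deriv u x / u x = Real.log (u b) - Real.log (u a) := by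
  have hlog : AbsolutelyContinuousOnInterval (fun x ↦ Real.log (u x)) a b :=
    absolutelyContinuousOnInterval_comp_of_contDiffOn
      (Real.contDiffOn_log.mono (image_subset_iff.2 hne)) hu
  rw [← hlog.integral_deriv_eq_sub]
  refine intervalIntegral.integral_congr_ae ?_
  filter_upwards [hu.ae_differentiableAt] with x hdiff hx
  have hx := uIoc_subset_uIcc hx
  exact (deriv.log (hdiff hx) (hne x hx)).symm

end AbsolutelyContinuous

section Primitive

variable {G g : ℝ → ℝ} {a b : ℝ}

theorem integral_div_primitive_eq_log_sub_log (hg : IntervalIntegrable g volume a b)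
    (hG : ∀ x ∈ uIcc a b, G x = G a + ∫ t in a..x, g t) (hne : ∀ x ∈ uIcc a b, G x ≠ 0) :
    ∫ x in a..b, g x / G x = Real.log (G b) - Real.log (G a) := by
  have hP : AbsolutelyContinuousOnInterval (fun x ↦ G a + ∫ t in a..x, g t) a b :=
    contDiffOn_const.absolutelyContinuousOnInterval.fun_add
      (hg.absolutelyContinuousOnInterval_intervalIntegral left_mem_uIcc)
  rw [hG a left_mem_uIcc, hG b right_mem_uIcc,
    ← integral_deriv_div_eq_log_sub_log hP fun x hx ↦ (hG x hx).symm.trans_ne (hne x hx)]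
  refine intervalIntegral.integral_congr_ae ?_
  filter_upwards [hg.ae_hasDerivAt_integral] with x hderiv hx
  have hx := uIoc_subset_uIcc hx
  rw [((hderiv hx a left_mem_uIcc).const_add (G a)).deriv, hG x hx]

theorem exp_integral_div_primitive (hg : IntervalIntegrable g volume a b)
    (hG : ∀ x ∈ uIcc a b, G x = G a + ∫ t in a..x, g t) (hpos : ∀ x ∈ uIcc a b, 0 < G x) :
    Real.exp (∫ x in a..b, g x / G x) = G b / G a := by
  rw [integral_div_primitive_eq_log_sub_log hg hG fun x hx ↦ (hpos x hx).ne', Real.exp_sub,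
    Real.exp_log (hpos b right_mem_uIcc), Real.exp_log (hpos a left_mem_uIcc)]

theorem intervalIntegrable_div_primitive (hg : IntervalIntegrable g volume a b)
    (hG : ∀ x ∈ uIcc a b, G x = G a + ∫ t in a..x, g t) (hne : ∀ x ∈ uIcc a b, G x ≠ 0) :
    IntervalIntegrable (fun x ↦ g x / G x) volume a b := by
  have hcont : ContinuousOn G (uIcc a b) :=
    (continuousOn_const.add
      (intervalIntegral.continuousOn_primitive_interval' hg left_mem_uIcc)).congr hG
  simpa only [div_eq_mul_inv, Pi.inv_apply] using hg.mul_continuousOn (hcont.inv₀ hne)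

end Primitive

theorem tendsto_intervalIntegral_add_right_atTop {E : Type*} [NormedAddCommGroup E]
    [NormedSpace ℝ E] [CompleteSpace E] {h : ℝ → E} {c : E} {y : ℝ}
    (hint : ∀ᶠ x in atTop, IntervalIntegrable h volume x (x + y)) (hc : Tendsto h atTop (𝓝 c)) :
    Tendsto (fun x ↦ ∫ t in x..x + y, h t) atTop (𝓝 (y • c)) := by
  rw [Metric.tendsto_nhds]
  intro ε hε
  have hδ : 0 < ε / (|y| + 1) := by positivity
  obtain ⟨N, hN⟩ := eventually_atTop.1 (Metric.tendsto_nhds.1 hc _ hδ)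
  have htail : Tendsto (fun x ↦ x + y) atTop atTop := tendsto_atTop_add_const_right _ y tendsto_id
  filter_upwards [hint, eventually_ge_atTop N, htail.eventually_ge_atTop N] with x hx hxN hyN
  have hclose : ∀ t ∈ uIoc x (x + y), ‖h t - c‖ ≤ ε / (|y| + 1) := fun t ht ↦ by
    rw [← dist_eq_norm]
    exact (hN t ((le_min hxN hyN).trans ht.1.le)).le
  calc
    dist (∫ t in x..x + y, h t) (y • c) = ‖∫ t in x..x + y, (h t - c)‖ := by
      rw [intervalIntegral.integral_sub hx intervalIntegrable_const,
        intervalIntegral.integral_const, add_sub_cancel_left, dist_eq_norm]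
    _ ≤ ε / (|y| + 1) * |x + y - x| := intervalIntegral.norm_integral_le_of_norm_le_const hclose
    _ = ε / (|y| + 1) * |y| := by rw [add_sub_cancel_left]
    _ < ε / (|y| + 1) * (|y| + 1) := by gcongr; exact lt_add_one _
    _ = ε := by field

theorem tendsto_primitive_ratio_atTop {G g : ℝ → ℝ} {a c : ℝ}
    (hg : LocallyIntegrableOn g (Ici a)) (hG : ∀ x ∈ Ici a, G x = G a + ∫ t in a..x, g t)
    (hpos : ∀ x ∈ Ici a, 0 < G x) (hc : Tendsto (fun x ↦ g x / G x) atTop (𝓝 c)) (y : ℝ) :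
    Tendsto (fun x ↦ G (x + y) / G x) atTop (𝓝 (Real.exp (y * c))) := by
  have hint {p q : ℝ} (hp : a ≤ p) (hq : a ≤ q) : IntervalIntegrable g volume p q :=
    (hg.integrableOn_compact_subset
      (ordConnected_Ici.uIcc_subset hp hq) isCompact_uIcc).intervalIntegrable
  have hprimitive {p x : ℝ} (hp : a ≤ p) (hx : a ≤ x) : G x = G p + ∫ t in p..x, g t := by
    rw [hG x hx, hG p hp, add_assoc,
      intervalIntegral.integral_add_adjacent_intervals (hint le_rfl hp) (hint hp hx)]
  have hlocal : ∀ᶠ x in atTop, IntervalIntegrable g volume x (x + y) ∧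
      (∀ t ∈ uIcc x (x + y), G t = G x + ∫ s in x..t, g s) ∧ ∀ t ∈ uIcc x (x + y), 0 < G t := by
    filter_upwards [eventually_ge_atTop a,
      (tendsto_atTop_add_const_right _ y tendsto_id).eventually_ge_atTop a] with x hx hxy
    have hsub : uIcc x (x + y) ⊆ Ici a := ordConnected_Ici.uIcc_subset hx hxy
    exact ⟨hint hx hxy, fun t ht ↦ hprimitive hx (hsub ht), fun t ht ↦ hpos t (hsub ht)⟩
  have hlogDeriv : ∀ᶠ x in atTop, IntervalIntegrable (fun t ↦ g t / G t) volume x (x + y) :=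
    hlocal.mono fun x ⟨hgx, hGx, hposx⟩ ↦
      intervalIntegrable_div_primitive hgx hGx fun t ht ↦ (hposx t ht).ne'
  refine (tendsto_intervalIntegral_add_right_atTop hlogDeriv hc).rexp.congr' ?_
  exact hlocal.mono fun x ⟨hgx, hGx, hposx⟩ ↦ exp_integral_div_primitive hgx hGx hposx

theorem tendsto_survival_ratio_of_tendsto_hazard {F f : ℝ → ℝ} {L : ℝ}
    (hf : LocallyIntegrableOn f (Ici 0)) (hF : ∀ t, 0 ≤ t → F t = ∫ u in (0 : ℝ)..t, f u)
    (hlt : ∀ t > 0, F t < 1) (hL : Tendsto (fun t ↦ f t / (1 - F t)) atTop (𝓝 L)) (y : ℝ) :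
    Tendsto (fun x ↦ (1 - F (x + y)) / (1 - F x)) atTop (𝓝 (Real.exp (-(y * L)))) := by
  have hF0 : F 0 = 0 := by rw [hF 0 le_rfl, intervalIntegral.integral_same]
  have hpos (t : ℝ) (ht : t ∈ Ici 0) : 0 < 1 - F t := by
    obtain rfl | ht := (mem_Ici.1 ht).eq_or_lt
    · rw [hF0, sub_zero]
      exact one_pos
    · exact sub_pos.2 (hlt t ht)
  have hneg : Tendsto (fun t ↦ -f t / (1 - F t)) atTop (𝓝 (-L)) := by
    simpa only [neg_div] using hL.neg
  rw [← mul_neg]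
  refine tendsto_primitive_ratio_atTop hf.neg (fun t ht ↦ ?_) hpos hneg y
  simp only [Pi.neg_apply]
  rw [intervalIntegral.integral_neg, hF0, hF t ht, sub_zero, sub_eq_add_neg]

theorem measureReal_lt_eq_one_sub_measureReal_le {Ω : Type*} [MeasurableSpace Ω] {μ : Measure Ω}
    [IsProbabilityMeasure μ] {α : Type*} [LinearOrder α] [TopologicalSpace α]
    [ClosedIicTopology α] [MeasurableSpace α] [OpensMeasurableSpace α] {X : Ω → α}
    (hX : AEMeasurable X μ) (t : α) :
    μ.real {ω | t < X ω} = 1 - μ.real {ω | X ω ≤ t} := by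
  have hcompl : {ω | t < X ω} = {ω | X ω ≤ t}ᶜ := by ext; simp
  rw [hcompl]
  exact probReal_compl_eq_one_sub₀ (hX.nullMeasurable measurableSet_Iic)

theorem stmt_2 {Ω : Type*} [MeasureSpace Ω] [IsProbabilityMeasure (ℙ : Measure Ω)]
    (X : Ω → ℝ) (hX : Measurable X) (hXpos : ∀ ω, 0 < X ω)
    (F : ℝ → ℝ) (hF : ∀ t, F t = (ℙ {ω | X ω ≤ t}).toReal)
    (f : ℝ → ℝ) (hf_nonneg : ∀ t ∈ Set.Ioi (0:ℝ), 0 ≤ f t)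
    (hf_int : IntegrableOn f (Set.Ioi (0:ℝ)))
    (hpdf : ∀ t, 0 ≤ t → F t = ∫ u in (0:ℝ)..t, f u)
    (hFlt1 : ∀ x > (0:ℝ), F x < 1)
    (r : ℝ → ℝ) (hr : ∀ t, r t = f t / (1 - F t))
    (hr_lim : ∃ L : ℝ, Tendsto r atTop (𝓝 L)) :
    ((∀ x > (0:ℝ), 0 < (ℙ {ω | x < X ω}).toReal) ∧
      ∀ y > (0:ℝ), Tendsto (fun x => (ℙ {ω | x + y < X ω}).toReal / (ℙ {ω | x < X ω}).toReal)
        atTop (𝓝 1)) ↔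
    Tendsto r atTop (𝓝 0) := by
  obtain rfl : r = fun t ↦ f t / (1 - F t) := funext hr
  have hsurvival (t : ℝ) : (ℙ {ω | t < X ω}).toReal = 1 - F t := by
    rw [hF]
    exact measureReal_lt_eq_one_sub_measureReal_le hX.aemeasurable t
  have hf : LocallyIntegrableOn f (Ici 0) :=
    ((integrableOn_Ici_iff_integrableOn_Ioi).2 hf_int).locallyIntegrableOn
  simp only [hsurvival]
  constructor
  · rintro ⟨-, hlong⟩
    obtain ⟨L, hL⟩ := hr_lim
    have hexp : Real.exp (-(1 * L)) = 1 := tendsto_nhds_unique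
      (tendsto_survival_ratio_of_tendsto_hazard hf hpdf hFlt1 hL 1) (hlong 1 one_pos)
    obtain rfl : L = 0 := by simpa using hexp
    exact hL
  · refine fun hzero ↦ ⟨fun x hx ↦ sub_pos.2 (hFlt1 x hx), fun y _ ↦ ?_⟩
    simpa using tendsto_survival_ratio_of_tendsto_hazard hf hpdf hFlt1 hzero y
end

section
/- Let X be a positive real-valued random variable with continuous probability density function f that is strictly positive on (0,∞), cumulative distribution function F satisfying F(x) < 1 for all x > 0, and hazard rate function r(t) = f(t)/(1 − F(t)). Suppose X is long-tailed, 0 < E[X] < ∞, and both limits lim_{t→∞} r(t) and lim_{t→∞} t²·f(t) exist. Then there exists t > 0 with F(t) > 0 and ∫₀^t (1 − F(s)) ds < F(t)·E[X]; that is, restarts are useful for X. -/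
open MeasureTheory Filter Set Topology ProbabilityTheory

/-!
Write `S t = P(X > t)`, so that `E[X] = ∫₀^∞ S`. Since `∫₀^t S = E[X] - ∫ₜ^∞ S`, restarting at time
`t` is useful exactly when the mean residual life `(∫ₜ^∞ S) / S t` exceeds `E[X]`. As `S` is
antitone, the mean residual life is at least `y * (S (t + y) / S t)` for every `y ≥ 0`. For a long
tail this bound tends to `y` as `t → ∞`, so the mean residual life tends to infinity and every
sufficiently late restart time is useful.
-/

/-- The survival function `t ↦ P(X > t)` of a real random variable `X`. It is real-valued, with the
junk value `0` where the measure of `{X > t}` is infinite. -/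
noncomputable def survival {Ω : Type*} [MeasurableSpace Ω] (μ : Measure Ω) (X : Ω → ℝ)
    (t : ℝ) : ℝ :=
  μ.real {ω | t < X ω}

/-- A random variable is long-tailed when its survival function `S` satisfies this predicate. -/
structure IsLongTailed_s13 (S : ℝ → ℝ) : Prop where
  pos : ∀ x > 0, 0 < S x
  tendsto_ratio : ∀ y > 0, Tendsto (fun x => S (x + y) / S x) atTop (𝓝 1)

/-- The mean residual life `E[X - t | X > t]` of a random variable `X` with survival function `S`,
expressed through `E[(X - t)⁺] = ∫ₜ^∞ S`. -/
noncomputable def meanResidualLife (S : ℝ → ℝ) (t : ℝ) : ℝ :=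
  (∫ s in Ioi t, S s) / S t

section MeanResidualLife

variable {S : ℝ → ℝ} {t y : ℝ}

lemma mul_le_integral_Ioi_of_antitoneOn (hanti : AntitoneOn S (Ioi t))
    (hnonneg : ∀ s ∈ Ioi t, 0 ≤ S s) (hint : IntegrableOn S (Ioi t)) (hy : 0 ≤ y) :
    y * S (t + y) ≤ ∫ s in Ioi t, S s :=
  calc y * S (t + y) = ∫ _ in Ioc t (t + y), S (t + y) := by simp [hy]
    _ ≤ ∫ s in Ioc t (t + y), S s :=
      setIntegral_mono_on (by simp) (hint.mono_set Ioc_subset_Ioi_self) measurableSet_Ioc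
        fun s hs => hanti hs.1 (hs.1.trans_le hs.2) hs.2
    _ ≤ ∫ s in Ioi t, S s :=
      setIntegral_mono_set hint (ae_restrict_of_forall_mem measurableSet_Ioi hnonneg)
        Ioc_subset_Ioi_self.eventuallyLE

lemma mul_ratio_le_meanResidualLife (hanti : AntitoneOn S (Ioi t))
    (hnonneg : ∀ s ∈ Ici t, 0 ≤ S s) (hint : IntegrableOn S (Ioi t)) (hy : 0 ≤ y) :
    y * (S (t + y) / S t) ≤ meanResidualLife S t := by
  rw [← mul_div_assoc]
  exact div_le_div_of_nonneg_right
    (mul_le_integral_Ioi_of_antitoneOn hanti (fun s hs => hnonneg s (Ioi_subset_Ici_self hs)) hint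
      hy)
    (hnonneg t self_mem_Ici)

theorem IsLongTailed_s13.tendsto_meanResidualLife_atTop (hS : IsLongTailed_s13 S)
    (hanti : AntitoneOn S (Ioi 0)) (hint : IntegrableOn S (Ioi 0)) :
    Tendsto (meanResidualLife S) atTop atTop := by
  refine tendsto_atTop.2 fun c => ?_
  obtain ⟨y, hcy, hy⟩ : ∃ y, c < y ∧ 0 < y :=
    ((eventually_gt_atTop c).and (eventually_gt_atTop 0)).exists
  have hlim : Tendsto (fun t => y * (S (t + y) / S t)) atTop (𝓝 y) := by
    simpa only [mul_one] using (hS.tendsto_ratio y hy).const_mul y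
  filter_upwards [hlim.eventually_const_lt hcy, eventually_gt_atTop 0] with t hct ht
  have hsub : Ioi t ⊆ Ioi 0 := Ioi_subset_Ioi ht.le
  have hnonneg : ∀ s ∈ Ici t, 0 ≤ S s := fun s hs => (hS.pos s (ht.trans_le hs)).le
  exact hct.le.trans
    (mul_ratio_le_meanResidualLife (hanti.mono hsub) hnonneg (hint.mono_set hsub) hy.le)

lemma integral_lt_one_sub_mul_iff_lt_meanResidualLife (hint : IntegrableOn S (Ioi 0))
    (ht : 0 ≤ t) (hSt : 0 < S t) :
    ∫ s in 0..t, S s < (1 - S t) * ∫ s in Ioi 0, S s ↔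
      ∫ s in Ioi 0, S s < meanResidualLife S t := by
  have hsplit : ∫ s in 0..t, S s = (∫ s in Ioi 0, S s) - ∫ s in Ioi t, S s :=
    (intervalIntegral.integral_Ioi_sub_Ioi hint ht).symm
  rw [meanResidualLife, lt_div_iff₀ hSt, hsplit, sub_mul, one_mul, sub_lt_sub_iff_left, mul_comm]

end MeanResidualLife

section Survival

variable {Ω : Type*} [MeasurableSpace Ω] {μ : Measure Ω} {X : Ω → ℝ}

lemma antitone_survival [IsFiniteMeasure μ] : Antitone (survival μ X) :=
  fun _ _ hst => measureReal_mono fun _ hω => hst.trans_lt hω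

lemma survival_eq_one_sub [IsProbabilityMeasure μ] (hX : AEMeasurable X μ) (t : ℝ) :
    survival μ X t = 1 - μ.real {ω | X ω ≤ t} := by
  rw [← probReal_compl_eq_one_sub₀ (nullMeasurableSet_le hX aemeasurable_const), compl_ofPred]
  simp only [not_le, survival]

lemma integrableOn_survival (hX : Integrable X μ) (hXnonneg : 0 ≤ᵐ[μ] X) :
    IntegrableOn (survival μ X) (Ioi 0) := by
  have hmeas : Measurable fun t => μ {ω | t < X ω} :=
    Antitone.measurable fun _ _ hst => measure_mono fun _ hω => lt_of_le_of_lt hst hω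
  refine integrable_toReal_of_lintegral_ne_top hmeas.aemeasurable ?_
  rw [← lintegral_eq_lintegral_meas_lt μ hXnonneg hX.aemeasurable]
  exact hX.lintegral_lt_top.ne

end Survival

theorem stmt_13_general {Ω : Type*} [MeasurableSpace Ω] {μ : Measure Ω} [IsProbabilityMeasure μ]
    {X : Ω → ℝ} (hX : Integrable X μ) (hXnonneg : 0 ≤ᵐ[μ] X) (htail : IsLongTailed_s13 (survival μ X)) :
    ∀ᶠ t in atTop, 0 < μ.real {ω | X ω ≤ t} ∧
      ∫ s in 0..t, (1 - μ.real {ω | X ω ≤ s}) < μ.real {ω | X ω ≤ t} * ∫ ω, X ω ∂μ := by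
  have hint := integrableOn_survival hX hXnonneg
  have hmean : ∫ ω, X ω ∂μ = ∫ t in Ioi 0, survival μ X t :=
    hX.integral_eq_integral_meas_lt hXnonneg
  have hlate : ∀ᶠ t in atTop, ∫ ω, X ω ∂μ < meanResidualLife (survival μ X) t :=
    (htail.tendsto_meanResidualLife_atTop (antitone_survival.antitoneOn _)
      hint).eventually_gt_atTop _
  filter_upwards [hlate, eventually_gt_atTop 0] with t hlt ht
  have huseful : ∫ s in 0..t, survival μ X s < μ.real {ω | X ω ≤ t} * ∫ ω, X ω ∂μ := by
    rw [hmean] at hlt ⊢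
    rw [← sub_sub_self 1 (μ.real {ω | X ω ≤ t}), ← survival_eq_one_sub hX.aemeasurable]
    exact (integral_lt_one_sub_mul_iff_lt_meanResidualLife hint ht.le (htail.pos t ht)).2 hlt
  have hrun_nonneg : 0 ≤ ∫ s in 0..t, survival μ X s :=
    intervalIntegral.integral_nonneg ht.le fun _ _ => measureReal_nonneg
  refine ⟨pos_of_mul_pos_left (hrun_nonneg.trans_lt huseful) (integral_nonneg_of_ae hXnonneg), ?_⟩
  simpa only [← survival_eq_one_sub hX.aemeasurable] using huseful

theorem stmt_13 {Ω : Type*} [MeasureSpace Ω] [IsProbabilityMeasure (ℙ : Measure Ω)]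
    (X : Ω → ℝ) (hX : Measurable X) (hXpos : ∀ ω, 0 < X ω)
    (F : ℝ → ℝ) (hF : ∀ t, F t = (ℙ {ω | X ω ≤ t}).toReal)
    (f : ℝ → ℝ) (hf_nonneg : ∀ t ∈ Set.Ioi (0:ℝ), 0 ≤ f t)
    (hf_int : IntegrableOn f (Set.Ioi (0:ℝ)))
    (hpdf : ∀ t, 0 ≤ t → F t = ∫ u in (0:ℝ)..t, f u)
    (hf_cont : ContinuousOn f (Set.Ioi (0:ℝ)))
    (hf_pos : ∀ t ∈ Set.Ioi (0:ℝ), 0 < f t)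
    (hFlt1 : ∀ x > (0:ℝ), F x < 1)
    (r : ℝ → ℝ) (hr : ∀ t, r t = f t / (1 - F t))
    (hlt_pos : ∀ x > (0:ℝ), 0 < (ℙ {ω | x < X ω}).toReal)
    (hlt : ∀ y > (0:ℝ), Tendsto (fun x => (ℙ {ω | x + y < X ω}).toReal / (ℙ {ω | x < X ω}).toReal)
      atTop (𝓝 1))
    (hXint : Integrable X)
    (hEpos : 0 < ∫ ω, X ω)
    (hr_lim : ∃ L : ℝ, Tendsto r atTop (𝓝 L))
    (hf_lim : ∃ L : ℝ, Tendsto (fun t => t ^ 2 * f t) atTop (𝓝 L)) :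
    ∃ t > (0:ℝ), 0 < F t ∧ (∫ s in (0:ℝ)..t, (1 - F s)) < F t * ∫ ω, X ω := by
  obtain rfl : F = fun t => (ℙ {ω | X ω ≤ t}).toReal := funext hF
  exact ((eventually_gt_atTop 0).and (stmt_13_general hXint (.of_forall fun ω => (hXpos ω).le)
    ⟨hlt_pos, hlt⟩)).exists
end

section
/- Let Z be a standard normally distributed real random variable, and let σ > 0, γ ≥ 0, μ ∈ ℝ. Then the three-parameter lognormal random variable X = γ + exp(μ + σ·Z) is long-tailed; that is, P(X > x) > 0 for every x > 0 and, for every y > 0, lim_{x→∞} P(X > x+y)/P(X > x) = 1. -/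
open MeasureTheory Filter Set Topology ProbabilityTheory

/-!
The tail of a long-tailed integrable density `f` is long-tailed: `P(X > x + y) = ∫ t > x, f (t + y)`
and `f (t + y) ~ f t`, so the two tail integrals are equivalent. The density of `exp Y` for
`Y ~ N(m, v)` is, up to a constant, `x⁻¹ * exp (-(log x - m)² / (2v))`, and it is long-tailed
because `log (x + y) - log x = O(1 / x)` while `log x = o(x)`, so that the exponent changes by
`o(1)` under a translation.
-/

open Asymptotics Real
open scoped NNReal

section TailIntegral

variable {α E : Type*} [LinearOrder α] [MeasurableSpace α] [TopologicalSpace α]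
  [OrderClosedTopology α] [OpensMeasurableSpace α] {μ : Measure α}
  [NormedAddCommGroup E] [NormedSpace ℝ E]

lemma isLittleO_setIntegral_Ioi {f : α → E} {g : α → ℝ} {a : α} (hg : IntegrableOn g (Ioi a) μ)
    (hg_nonneg : ∀ᶠ x in atTop, 0 ≤ g x) (hfg : f =o[atTop] g) :
    (fun x ↦ ∫ t in Ioi x, f t ∂μ) =o[atTop] fun x ↦ ∫ t in Ioi x, g t ∂μ := by
  refine isLittleO_iff.2 fun c hc ↦ ?_
  filter_upwards [eventually_ge_atTop a, eventually_forall_ge_atTop.2 hg_nonneg,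
    eventually_forall_ge_atTop.2 (hfg.bound hc)] with x hax hg_nonneg hfg
  have hbound : ∀ᵐ t ∂μ.restrict (Ioi x), ‖f t‖ ≤ c * g t :=
    ae_restrict_of_forall_mem measurableSet_Ioi fun t ht ↦
      (hfg t (le_of_lt ht)).trans_eq (by rw [norm_of_nonneg (hg_nonneg t (le_of_lt ht))])
  calc ‖∫ t in Ioi x, f t ∂μ‖
      ≤ ∫ t in Ioi x, c * g t ∂μ :=
        norm_integral_le_of_norm_le ((hg.mono_set (Ioi_subset_Ioi hax)).const_mul c) hbound
    _ = c * ∫ t in Ioi x, g t ∂μ := integral_const_mul c g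
    _ ≤ c * ‖∫ t in Ioi x, g t ∂μ‖ := by gcongr; exact le_norm_self _

lemma isEquivalent_setIntegral_Ioi {f g : α → ℝ} {a : α} (hf : IntegrableOn f (Ioi a) μ)
    (hg : IntegrableOn g (Ioi a) μ) (hg_nonneg : ∀ᶠ x in atTop, 0 ≤ g x) (hfg : f ~[atTop] g) :
    (fun x ↦ ∫ t in Ioi x, f t ∂μ) ~[atTop] fun x ↦ ∫ t in Ioi x, g t ∂μ := by
  refine (isLittleO_setIntegral_Ioi hg hg_nonneg hfg.isLittleO).congr' ?_ .rfl
  filter_upwards [eventually_ge_atTop a] with x hax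
  exact integral_sub (hf.mono_set (Ioi_subset_Ioi hax)) (hg.mono_set (Ioi_subset_Ioi hax))

end TailIntegral

lemma integrableOn_Ioi_comp_add_right {E : Type*} [NormedAddCommGroup E] {f : ℝ → E} {a y : ℝ} :
    IntegrableOn (fun t ↦ f (t + y)) (Ioi a) ↔ IntegrableOn f (Ioi (a + y)) := by
  simpa [Function.comp_def] using (measurePreserving_add_right volume y).integrableOn_comp_preimage
    (measurableEmbedding_addRight y) (f := f) (s := Ioi (a + y))

lemma setIntegral_Ioi_comp_add_right {E : Type*} [NormedAddCommGroup E] [NormedSpace ℝ E]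
    (f : ℝ → E) (a y : ℝ) : ∫ t in Ioi a, f (t + y) = ∫ t in Ioi (a + y), f t := by
  simpa using (measurePreserving_add_right volume y).setIntegral_preimage_emb
    (measurableEmbedding_addRight y) f (Ioi (a + y))

/-- A long-tailed function: eventually positive, and asymptotically equivalent to each of its
translates. A random variable is long-tailed when its tail function `x ↦ P(X > x)` is; the notion
applies equally to densities. -/
structure IsLongTailed_s14 (f : ℝ → ℝ) : Prop where
  eventually_pos : ∀ᶠ x in atTop, 0 < f x
  isEquivalent_comp_add : ∀ y, (fun x ↦ f (x + y)) ~[atTop] f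

namespace IsLongTailed_s14

variable {f g : ℝ → ℝ}

lemma tendsto_div (hf : IsLongTailed_s14 f) (y : ℝ) :
    Tendsto (fun x ↦ f (x + y) / f x) atTop (𝓝 1) :=
  (isEquivalent_iff_tendsto_one (hf.eventually_pos.mono fun _ h ↦ h.ne')).1
    (hf.isEquivalent_comp_add y)

lemma congr (hf : IsLongTailed_s14 f) (hfg : f =ᶠ[atTop] g) : IsLongTailed_s14 g where
  eventually_pos := by
    filter_upwards [hf.eventually_pos, hfg] with x hx hfgx
    rwa [← hfgx]
  isEquivalent_comp_add y :=
    ((hf.isEquivalent_comp_add y).congr_right hfg).congr_left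
      ((tendsto_atTop_add_const_right _ y tendsto_id).eventually hfg)

lemma mul (hf : IsLongTailed_s14 f) (hg : IsLongTailed_s14 g) : IsLongTailed_s14 fun x ↦ f x * g x where
  eventually_pos := by
    filter_upwards [hf.eventually_pos, hg.eventually_pos] with x hfx hgx
    exact mul_pos hfx hgx
  isEquivalent_comp_add y := (hf.isEquivalent_comp_add y).mul (hg.isEquivalent_comp_add y)

lemma comp_sub_const (hf : IsLongTailed_s14 f) (c : ℝ) : IsLongTailed_s14 fun x ↦ f (x - c) where
  eventually_pos := (tendsto_atTop_add_const_right _ (-c) tendsto_id).eventually hf.eventually_pos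
  isEquivalent_comp_add y := by
    simpa only [Function.comp_def, id, ← sub_eq_add_neg, sub_add_eq_add_sub] using
      (hf.isEquivalent_comp_add y).comp_tendsto (tendsto_atTop_add_const_right _ (-c) tendsto_id)

lemma setIntegral_Ioi {a : ℝ} (hf : IsLongTailed_s14 f) (hint : IntegrableOn f (Ioi a)) :
    IsLongTailed_s14 fun x ↦ ∫ t in Ioi x, f t where
  eventually_pos := by
    filter_upwards [eventually_ge_atTop a, eventually_forall_ge_atTop.2 hf.eventually_pos]
      with x hax hpos
    have hsupp : Ioi x ⊆ Function.support f := fun t ht ↦ (hpos t (le_of_lt ht)).ne'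
    rw [setIntegral_pos_iff_support_of_nonneg_ae
      (ae_restrict_of_forall_mem measurableSet_Ioi fun t ht ↦ (hpos t (le_of_lt ht)).le)
      (hint.mono_set (Ioi_subset_Ioi hax)), inter_eq_right.2 hsupp, volume_Ioi]
    exact ENNReal.zero_lt_top
  isEquivalent_comp_add y := by
    simp_rw [← setIntegral_Ioi_comp_add_right]
    have hint_shift : IntegrableOn (fun t ↦ f (t + y)) (Ioi (max a (a - y))) :=
      integrableOn_Ioi_comp_add_right.2 <| hint.mono_set <| Ioi_subset_Ioi <|
        sub_le_iff_le_add.1 (le_max_right a (a - y))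
    exact isEquivalent_setIntegral_Ioi hint_shift
      (hint.mono_set (Ioi_subset_Ioi (le_max_left a (a - y))))
      (hf.eventually_pos.mono fun _ h ↦ h.le) (hf.isEquivalent_comp_add y)

end IsLongTailed_s14

lemma isLongTailed_const {c : ℝ} (hc : 0 < c) : IsLongTailed_s14 fun _ ↦ c :=
  ⟨.of_forall fun _ ↦ hc, fun _ ↦ .refl⟩

lemma isLongTailed_inv : IsLongTailed_s14 fun x ↦ x⁻¹ where
  eventually_pos := (eventually_gt_atTop 0).mono fun _ ↦ inv_pos.2
  isEquivalent_comp_add _ :=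
    (IsEquivalent.refl.add_const_of_norm_tendsto_atTop tendsto_norm_atTop_atTop).inv

lemma isLongTailed_exp_of_tendsto_sub {h : ℝ → ℝ}
    (hh : ∀ y, Tendsto (fun x ↦ h (x + y) - h x) atTop (𝓝 0)) :
    IsLongTailed_s14 fun x ↦ exp (h x) where
  eventually_pos := .of_forall fun _ ↦ exp_pos _
  isEquivalent_comp_add y := by
    refine isEquivalent_of_tendsto_one ?_
    simpa only [Pi.div_def, ← exp_sub, exp_zero] using (hh y).rexp

lemma tendsto_log_add_sub_log_mul_log (y : ℝ) :
    Tendsto (fun x ↦ (log (x + y) - log x) * log x) atTop (𝓝 0) := by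
  have hlim : Tendsto (fun x ↦ x * log (1 + y / x) * (log x / x)) atTop (𝓝 (y * 0)) :=
    (tendsto_mul_log_one_add_div_atTop y).mul isLittleO_log_id_atTop.tendsto_div_nhds_zero
  rw [mul_zero] at hlim
  refine hlim.congr' ?_
  filter_upwards [eventually_gt_atTop 0, eventually_gt_atTop (-y)] with x hx hxy
  have hlog : log (1 + y / x) = log (x + y) - log x := by
    rw [← log_div (by linarith) hx.ne', add_div, div_self hx.ne']
  rw [hlog]
  field_simp

lemma tendsto_sq_log_sub_const_comp_add_sub (m y : ℝ) :
    Tendsto (fun x ↦ (log (x + y) - m) ^ 2 - (log x - m) ^ 2) atTop (𝓝 0) := by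
  have hlog := tendsto_log_comp_add_sub_log y
  have hlim : Tendsto (fun x ↦ (log (x + y) - log x) ^ 2 + 2 * ((log (x + y) - log x) * log x) -
      2 * m * (log (x + y) - log x)) atTop (𝓝 0) := by
    simpa using ((hlog.pow 2).add ((tendsto_log_add_sub_log_mul_log y).const_mul 2)).sub
      (hlog.const_mul (2 * m))
  exact hlim.congr fun x ↦ by ring

/-- The density of the lognormal law, i.e. of `exp Y` for `Y ~ N(m, v)`. Only its values at
positive `x` are meaningful. -/
noncomputable def lognormalPDFReal (m : ℝ) (v : ℝ≥0) (x : ℝ) : ℝ :=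
  x⁻¹ * gaussianPDFReal m v (log x)

lemma isLongTailed_lognormalPDFReal (m : ℝ) {v : ℝ≥0} (hv : v ≠ 0) :
    IsLongTailed_s14 (lognormalPDFReal m v) := by
  have hexponent (y : ℝ) : Tendsto (fun x ↦ -(log (x + y) - m) ^ 2 / (2 * v) -
      -(log x - m) ^ 2 / (2 * v)) atTop (𝓝 0) := by
    simpa [neg_div, sub_div, neg_add_eq_sub] using
      ((tendsto_sq_log_sub_const_comp_add_sub m y).div_const (2 * (v : ℝ))).neg
  have hconst : 0 < (√(2 * π * v))⁻¹ := by positivity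
  exact isLongTailed_inv.mul
    ((isLongTailed_const hconst).mul (isLongTailed_exp_of_tendsto_sub hexponent))

lemma integrableOn_lognormalPDFReal (m : ℝ) (v : ℝ≥0) {a : ℝ} (ha : 0 < a) :
    IntegrableOn (lognormalPDFReal m v) (Ioi a) :=
  (integrableOn_comp_log_Ioi (gaussianPDFReal m v) ha).2
    (integrable_gaussianPDFReal m v).integrableOn

lemma gaussianReal_real_Ioi_log (m : ℝ) {v : ℝ≥0} (hv : v ≠ 0) {x : ℝ} (hx : 0 < x) :
    (gaussianReal m v).real (Ioi (log x)) = ∫ t in Ioi x, lognormalPDFReal m v t := by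
  rw [measureReal_def, gaussianReal_apply_eq_integral m hv, ENNReal.toReal_ofReal
    (integral_nonneg fun t ↦ gaussianPDFReal_nonneg m v t)]
  exact (integral_comp_log_Ioi (gaussianPDFReal m v) hx).symm

lemma isLongTailed_gaussianReal_real_Ioi_log (m : ℝ) {v : ℝ≥0} (hv : v ≠ 0) :
    IsLongTailed_s14 fun x ↦ (gaussianReal m v).real (Ioi (log x)) := by
  refine ((isLongTailed_lognormalPDFReal m hv).setIntegral_Ioi
    (integrableOn_lognormalPDFReal m v one_pos)).congr ?_
  filter_upwards [eventually_gt_atTop 0] with x hx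
  exact (gaussianReal_real_Ioi_log m hv hx).symm

section Lognormal

variable {Ω : Type*} {mΩ : MeasurableSpace Ω} {P : Measure Ω} {Y : Ω → ℝ} {m : ℝ} {v : ℝ≥0}

lemma measureReal_lt_add_exp_pos (hY : HasLaw Y (gaussianReal m v) P) (hv : v ≠ 0) (γ x : ℝ) :
    0 < P.real {ω | x < γ + exp (Y ω)} := by
  have hopen : IsOpen {u | x < γ + exp u} := isOpen_lt (by fun_prop) (by fun_prop)
  have hne : {u | x < γ + exp u}.Nonempty :=
    ⟨x - γ, sub_lt_iff_lt_add'.1 ((lt_add_one _).trans_le (add_one_le_exp _))⟩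
  have := (gaussianReal_absolutelyContinuous' m hv).isOpenPosMeasure
  rw [hY.measureReal_eq hopen.measurableSet]
  exact ENNReal.toReal_pos (hopen.measure_ne_zero _ hne) (measure_ne_top _ _)

lemma isLongTailed_measureReal_lt_add_exp (hY : HasLaw Y (gaussianReal m v) P) (hv : v ≠ 0)
    (γ : ℝ) : IsLongTailed_s14 fun x ↦ P.real {ω | x < γ + exp (Y ω)} := by
  refine ((isLongTailed_gaussianReal_real_Ioi_log m hv).comp_sub_const γ).congr ?_
  filter_upwards [eventually_gt_atTop γ] with x hx
  have hIoi : Ioi (log (x - γ)) = {u | x < γ + exp u} := by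
    ext u
    rw [mem_Ioi, log_lt_iff_lt_exp (sub_pos.2 hx), sub_lt_iff_lt_add', mem_ofPred_eq]
  rw [hIoi, hY.measureReal_eq (p := fun u ↦ x < γ + exp u) (hIoi ▸ measurableSet_Ioi)]

theorem stmt_14_general {Z : Ω → ℝ} (hZ : HasLaw Z (gaussianReal 0 1) P) {σ : ℝ} (hσ : σ ≠ 0)
    (γ μ : ℝ) :
    (∀ x, 0 < P.real {ω | x < γ + exp (μ + σ * Z ω)}) ∧
      ∀ y, Tendsto (fun x ↦ P.real {ω | x + y < γ + exp (μ + σ * Z ω)} /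
        P.real {ω | x < γ + exp (μ + σ * Z ω)}) atTop (𝓝 1) := by
  have hlaw := gaussianReal_const_add (gaussianReal_const_mul hZ σ) μ
  have hvar : NNReal.mk (σ ^ 2) (sq_nonneg σ) * 1 ≠ 0 := by simp [← NNReal.coe_ne_zero, hσ]
  exact ⟨measureReal_lt_add_exp_pos hlaw hvar γ,
    (isLongTailed_measureReal_lt_add_exp hlaw hvar γ).tendsto_div⟩

end Lognormal

theorem stmt_14 {Ω : Type*} [MeasureSpace Ω] [IsProbabilityMeasure (ℙ : Measure Ω)]
    (Z : Ω → ℝ) (hZ : Measurable Z)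
    (hZlaw : Measure.map Z ℙ = gaussianReal 0 1)
    (σ : ℝ) (hσ : 0 < σ) (γ : ℝ) (hγ : 0 ≤ γ) (μ : ℝ)
    (X : Ω → ℝ) (hXdef : ∀ ω, X ω = γ + Real.exp (μ + σ * Z ω)) :
    (∀ x > (0:ℝ), 0 < (ℙ {ω | x < X ω}).toReal) ∧
      ∀ y > (0:ℝ), Tendsto (fun x => (ℙ {ω | x + y < X ω}).toReal / (ℙ {ω | x < X ω}).toReal)
        atTop (𝓝 1) := by
  obtain rfl : X = fun ω ↦ γ + exp (μ + σ * Z ω) := funext hXdef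
  have ⟨hpos, hratio⟩ := stmt_14_general ⟨hZ.aemeasurable, hZlaw⟩ hσ.ne' γ μ
  exact ⟨fun x _ ↦ hpos x, fun y _ ↦ hratio y⟩
end
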